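/- arXiv:2603.10522 — 2 statements merged into one kernel-verified Lean document; each statement's English description precedes it below -/
import Mathlib

section
/- Let (V, p, e) be a hyperbolic system of degree n ≥ 2 with hyperbolicity cone Λ₊, derivative polynomial p′ and corresponding eigenvalue map λ′. If c ∈ Λ₊ is a rank-one element with λ(c) = (α, 0, …, 0)ᵀ, α > 0, then there exists β with 0 < β < α such that λ′(c) = (β, 0, …, 0)ᵀ ∈ ℝ^{n−1}; in particular, c is a rank-one element of (V, p′, e). -/
open scoped BigOperators

/-- A hyperbolic system `(V, p, e)` of degree `n`: `p : V → ℝ` is homogeneous of degree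
`n`, `e ≠ 0`, `p e ≠ 0`, and for every `x ∈ V` the univariate polynomial
`t ↦ p (t • e - x)` has `n` real roots (counted with multiplicity), recorded in
decreasing order by the eigenvalue map `eig x : Fin n → ℝ`. -/
structure HypSys (V : Type*) [AddCommGroup V] [Module ℝ V] (n : ℕ) where
  p : V → ℝ
  e : V
  e_ne : e ≠ 0
  homog : ∀ (t : ℝ) (x : V), p (t • x) = t ^ n * p x
  pe_ne : p e ≠ 0
  eig : V → Fin n → ℝ
  eig_anti : ∀ x : V, Antitone (eig x)
  factor : ∀ (x : V) (t : ℝ), p (t • e - x) = p e * ∏ i, (t - eig x i)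

namespace HypSys

variable {V : Type*} [AddCommGroup V] [Module ℝ V] {n : ℕ}

/-- The hyperbolicity cone `Λ₊ = {x : λ(x) ≥ 0}`. -/
def cone (H : HypSys V n) : Set V := {x | ∀ i, 0 ≤ H.eig x i}

/-- The set `Λ₊₊ = {x : λ(x) > 0}` (the interior of the hyperbolicity cone). -/
def conePos (H : HypSys V n) : Set V := {x | ∀ i, 0 < H.eig x i}

/-- The semi-inner product induced by the eigenvalue map:
`⟨x, y⟩ = (1/4) (‖λ(x+y)‖² − ‖λ(x−y)‖²)`. -/
noncomputable def ip (H : HypSys V n) (x y : V) : ℝ :=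
  (1 / 4) * ((∑ i, (H.eig (x + y) i) ^ 2) - (∑ i, (H.eig (x - y) i) ^ 2))

/-- The trace `tr x = ⟨x, e⟩`. -/
noncomputable def tr (H : HypSys V n) (x : V) : ℝ := H.ip x H.e

/-- The rank of `x`: the number of nonzero entries of `λ(x)`. -/
noncomputable def rank (H : HypSys V n) (x : V) : ℕ :=
  (Finset.univ.filter fun i => H.eig x i ≠ 0).card

/-- A hyperbolic system is complete if `λ(x) = 0` implies `x = 0`. -/
def Complete (H : HypSys V n) : Prop := ∀ x : V, (∀ i, H.eig x i = 0) → x = 0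

/-- A primitive idempotent: an element with eigenvalue vector `(1, 0, …, 0)ᵀ`. -/
def IsPrimitive (H : HypSys V n) (c : V) : Prop :=
  ∀ i : Fin n, H.eig c i = if i.val = 0 then 1 else 0

/-- The derivative polynomial `p′(x) = (d/dt) p(t • e + x) |_{t = 0}`. -/
noncomputable def derivPoly (H : HypSys V n) : V → ℝ :=
  fun x => deriv (fun t : ℝ => H.p (t • H.e + x)) 0

end HypSys

/-- if `n ≥ 2` and `c ∈ Λ₊` has `λ(c) = (α, 0, …, 0)ᵀ` with `α > 0`, then
there is `β` with `0 < β < α` such that `λ′(c) = (β, 0, …, 0)ᵀ ∈ ℝ^{n−1}`; in particular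
`c` is a rank-one element of the derivative system `(V, p′, e)`. -/
theorem statement7 {V : Type*} [AddCommGroup V] [Module ℝ V] [FiniteDimensional ℝ V]
    {n : ℕ} (hn : 2 ≤ n) (H : HypSys V n)
    (H' : HypSys V (n - 1)) (hp : H'.p = H.derivPoly) (he : H'.e = H.e)
    (c : V) (hc : c ∈ H.cone) (α : ℝ) (hα : 0 < α)
    (heig : ∀ i : Fin n, H.eig c i = if i.val = 0 then α else 0) :
    ∃ β : ℝ, 0 < β ∧ β < α ∧
      (∀ i : Fin (n - 1), H'.eig c i = if i.val = 0 then β else 0) ∧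
      H'.rank c = 1 := by
  obtain ⟨m, rfl⟩ : ∃ m, n = m + 2 := ⟨n - 2, by omega⟩
  change HypSys V (m + 1) at H'
  have hH : ∀ t : ℝ, H.p (t • H.e - c) = H.p H.e * ((t - α) * t ^ (m + 1)) := by
    intro t
    rw [H.factor, Fin.prod_univ_succ]
    simp [heig]
  set β : ℝ := (m + 1) * α / (m + 2) with hβ
  have hm : (0 : ℝ) < (m : ℝ) + 2 := by positivity
  have hβ0 : 0 < β := by positivity
  have hβα : β < α := by
    rw [hβ, div_lt_iff₀ hm]; nlinarith
  have hD : ∀ t : ℝ, H'.p (t • H.e - c) = H.p H.e * (m + 2) * (t ^ m * (t - β)) := by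
    intro t
    rw [hp]
    have h1 : (fun s : ℝ => H.p (s • H.e + (t • H.e - c)))
        = fun s : ℝ => H.p H.e * ((s + t - α) * (s + t) ^ (m + 1)) := by
      funext s
      rw [← hH, add_smul, add_sub_assoc]
    have hb : HasDerivAt (fun s : ℝ => s + t) 1 0 := (hasDerivAt_id (0 : ℝ)).add_const t
    have h2 := ((hb.sub_const α).mul (hb.pow (m + 1))).const_mul (H.p H.e)
    have h3 : H.derivPoly (t • H.e - c)
        = deriv (fun s : ℝ => H.p H.e * ((s + t - α) * (s + t) ^ (m + 1))) 0 := by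
      unfold HypSys.derivPoly
      rw [h1]
    rw [h3]
    refine (HasDerivAt.deriv h2).trans ?_
    have h4 : (m + 2) * β = (m + 1) * α := by rw [hβ]; field_simp
    simp only [Pi.pow_apply, zero_add, Nat.add_sub_cancel]
    push_cast
    linear_combination (-H.p H.e * t ^ m) * (- h4)
  have hfac : ∀ t : ℝ, H.p H.e * (m + 2) * (t ^ m * (t - β))
      = H'.p H'.e * ∏ i, (t - H'.eig c i) := by
    intro t
    rw [← hD, ← H'.factor, he]
  have hk : H.p H.e * (m + 2) ≠ 0 := mul_ne_zero H.pe_ne hm.ne'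
  have hroot : ∀ i, H'.eig c i = 0 ∨ H'.eig c i = β := by
    intro i
    have h := hfac (H'.eig c i)
    rw [Finset.prod_eq_zero (Finset.mem_univ i) (sub_self _), mul_zero] at h
    rcases mul_eq_zero.1 ((mul_eq_zero.1 h).resolve_left hk) with h | h
    · exact Or.inl (eq_zero_of_pow_eq_zero h)
    · exact Or.inr (sub_eq_zero.1 h)
  have h0 : H'.eig c 0 = β := by
    have h := hfac β
    rw [sub_self, mul_zero, mul_zero] at h
    obtain ⟨i, -, hi⟩ := Finset.prod_eq_zero_iff.1
      ((mul_eq_zero.1 h.symm).resolve_left H'.pe_ne)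
    have h5 : H'.eig c i ≤ H'.eig c 0 := H'.eig_anti c (Fin.zero_le i)
    rcases hroot 0 with h6 | h6
    · linarith
    · exact h6
  have hs : ∀ i : Fin m, H'.eig c i.succ = 0 := by
    have hpoly : (Polynomial.X - Polynomial.C β) *
          (Polynomial.C (H.p H.e * (m + 2)) * Polynomial.X ^ m)
        = (Polynomial.X - Polynomial.C β) * (Polynomial.C (H'.p H'.e) *
          ∏ i : Fin m, (Polynomial.X - Polynomial.C (H'.eig c i.succ))) := by
      apply Polynomial.funext
      intro t
      have h := hfac t
      rw [Fin.prod_univ_succ, h0] at h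
      simp only [Polynomial.eval_mul, Polynomial.eval_sub, Polynomial.eval_X,
        Polynomial.eval_C, Polynomial.eval_pow, Polynomial.eval_prod]
      linear_combination h
    have hq := mul_left_cancel₀ (Polynomial.X_sub_C_ne_zero β) hpoly
    intro i
    have h := congrArg (Polynomial.eval (H'.eig c i.succ)) hq
    simp only [Polynomial.eval_mul, Polynomial.eval_sub, Polynomial.eval_X,
        Polynomial.eval_C, Polynomial.eval_pow, Polynomial.eval_prod] at h
    rw [Finset.prod_eq_zero (Finset.mem_univ i) (sub_self _), mul_zero] at h
    exact eq_zero_of_pow_eq_zero ((mul_eq_zero.1 h).resolve_left hk)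
  have hall : ∀ i : Fin (m + 1), H'.eig c i = if i.val = 0 then β else 0 := by
    intro i
    refine Fin.cases ?_ ?_ i
    · simpa using h0
    · intro j; simpa using hs j
  refine ⟨β, hβ0, hβα, hall, ?_⟩
  change (Finset.univ.filter fun i : Fin (m + 1) => H'.eig c i ≠ 0).card = 1
  rw [Finset.card_eq_one]
  refine ⟨0, ?_⟩
  ext i
  refine Fin.cases ?_ ?_ i
  · simp [h0, hβ0.ne']
  · intro j; simp [hs j, Fin.succ_ne_zero]
end

section
/- Let (V, p, e) be a hyperbolic system of degree n with hyperbolicity cone Λ₊, derivative polynomial p′, and derivative hyperbolicity cone Λ₊′. Then: (a) if c ∈ Λ₊ has rank k in (V, p, e), where 1 ≤ k ≤ n−1, then c ∈ Λ₊′ and c has rank k in (V, p′, e); (b) if c ∈ Λ₊′ has rank k in (V, p′, e), where 1 ≤ k ≤ n−3, then c ∈ Λ₊ and c has rank k in (V, p, e). -/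
open scoped BigOperators

open Polynomial in
lemma hypAux_newton {ι : Type*} [DecidableEq ι] (s : Finset ι) (l : ι → ℝ) (x : ℝ) :
    0 ≤ (eval x (derivative (∏ i ∈ s, (X - C (l i))))) ^ 2 -
      eval x (∏ i ∈ s, (X - C (l i))) *
        eval x (derivative (derivative (∏ i ∈ s, (X - C (l i))))) := by
  induction s using Finset.induction_on with
  | empty => simp
  | insert a s ha ih =>
    rw [Finset.prod_insert ha]
    generalize (∏ i ∈ s, (X - C (l i))) = A at ih ⊢
    simp only [derivative_mul, derivative_add, derivative_sub, derivative_X, derivative_C,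
      eval_mul, eval_add, eval_sub, eval_X, eval_C, sub_zero, one_mul, derivative_one, eval_one]
    nlinarith [mul_nonneg (sq_nonneg (x - l a)) ih, sq_nonneg (eval x A)]

open Polynomial in
lemma hypAux_newton_strict {ι : Type*} [DecidableEq ι] (s : Finset ι) (hs : s.Nonempty)
    (l : ι → ℝ) (x : ℝ) (h0 : eval x (∏ i ∈ s, (X - C (l i))) ≠ 0) :
    0 < (eval x (derivative (∏ i ∈ s, (X - C (l i))))) ^ 2 -
      eval x (∏ i ∈ s, (X - C (l i))) *
        eval x (derivative (derivative (∏ i ∈ s, (X - C (l i))))) := by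
  obtain ⟨a, ha⟩ := hs
  have ih := hypAux_newton (s.erase a) l x
  rw [← Finset.mul_prod_erase s _ ha] at h0 ⊢
  generalize (∏ i ∈ s.erase a, (X - C (l i))) = A at ih h0 ⊢
  have hA : eval x A ≠ 0 := by
    intro h; apply h0; simp [h]
  simp only [derivative_mul, derivative_add, derivative_sub, derivative_X, derivative_C,
    eval_mul, eval_add, eval_sub, eval_X, eval_C, sub_zero, one_mul, derivative_one, eval_one]
  nlinarith [mul_nonneg (sq_nonneg (x - l a)) ih, pow_pos (abs_pos.2 hA) 2, sq_abs (eval x A)]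

open Polynomial in
lemma hypAux_logder {ι : Type*} [DecidableEq ι] (s : Finset ι) (l : ι → ℝ) (x : ℝ)
    (hx : ∀ i, x < l i) :
    eval x (∏ i ∈ s, (X - C (l i))) * eval x (derivative (∏ i ∈ s, (X - C (l i)))) ≤ 0 := by
  induction s using Finset.induction_on with
  | empty => simp
  | insert a s ha ih =>
    rw [Finset.prod_insert ha]
    generalize (∏ i ∈ s, (X - C (l i))) = A at ih ⊢
    simp only [derivative_mul, derivative_sub, derivative_X, derivative_C,
      eval_mul, eval_add, eval_sub, eval_X, eval_C, sub_zero, one_mul, eval_one]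
    nlinarith [mul_nonneg (sq_nonneg (x - l a)) (neg_nonneg.2 ih),
      mul_nonneg (sub_nonneg.2 (hx a).le) (sq_nonneg (eval x A))]

open Polynomial in
lemma hypAux_logder_strict {ι : Type*} [DecidableEq ι] (s : Finset ι) (hs : s.Nonempty)
    (l : ι → ℝ) (x : ℝ) (hx : ∀ i, x < l i) :
    eval x (derivative (∏ i ∈ s, (X - C (l i)))) ≠ 0 := by
  obtain ⟨a, ha⟩ := hs
  have ih := hypAux_logder (s.erase a) l x hx
  rw [← Finset.mul_prod_erase s _ ha]
  have hA : eval x (∏ i ∈ s.erase a, (X - C (l i))) ≠ 0 := by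
    rw [eval_prod]
    refine Finset.prod_ne_zero_iff.2 fun i _ => ?_
    simpa [sub_eq_zero] using (hx i).ne
  generalize (∏ i ∈ s.erase a, (X - C (l i))) = A at ih hA ⊢
  simp only [derivative_mul, derivative_sub, derivative_X, derivative_C,
    eval_mul, eval_add, eval_sub, eval_X, eval_C, sub_zero, one_mul, eval_one]
  intro h
  have h1 : eval x A * eval x A + (x - l a) * (eval x A * eval x (derivative A)) = 0 := by
    linear_combination eval x A * h
  nlinarith [mul_nonneg (sub_nonneg.2 (hx a).le) (neg_nonneg.2 ih), mul_self_pos.2 hA]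

namespace HypSys

open Polynomial in
/-- The characteristic polynomial of `x`. -/
noncomputable def chp {V : Type*} [AddCommGroup V] [Module ℝ V] {n : ℕ} (H : HypSys V n) (x : V) :
    ℝ[X] := ∏ i, (X - C (H.eig x i))

open Polynomial in
lemma eval_chp {V : Type*} [AddCommGroup V] [Module ℝ V] {n : ℕ} (H : HypSys V n) (x : V) (t : ℝ) :
    eval t (H.chp x) = ∏ i, (t - H.eig x i) := by
  simp [chp, eval_prod]

open Polynomial in
lemma chp_ne {V : Type*} [AddCommGroup V] [Module ℝ V] {n : ℕ} (H : HypSys V n) (x : V) :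
    H.chp x ≠ 0 :=
  Finset.prod_ne_zero_iff.2 fun i _ => X_sub_C_ne_zero _

open Polynomial in
lemma rank_add {V : Type*} [AddCommGroup V] [Module ℝ V] {n : ℕ} (H : HypSys V n) (x : V) :
    H.rank x + (H.chp x).rootMultiplicity 0 = n := by
  have h1 : (H.chp x).roots = Finset.univ.val.map (H.eig x) := by
    have : H.chp x = ((Finset.univ.val.map (H.eig x)).map (fun a => X - C a)).prod := by
      rw [Multiset.map_map]; rfl
    rw [this, roots_multiset_prod_X_sub_C]
  rw [← count_roots, h1, Multiset.count_map]
  have h2 := Finset.card_filter_add_card_filter_not (s := (Finset.univ : Finset (Fin n)))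
    (fun i => H.eig x i ≠ 0)
  rw [Finset.card_univ, Fintype.card_fin] at h2
  conv_rhs => rw [← h2]
  unfold rank
  congr 1
  rw [Finset.card_def, Finset.filter_val]
  congr 1
  apply Multiset.filter_congr
  intro i _
  simp [eq_comm]

open Polynomial in
lemma chp_deriv {V : Type*} [AddCommGroup V] [Module ℝ V] {n : ℕ} (H : HypSys V n)
    (H' : HypSys V (n - 1)) (hp : H'.p = H.derivPoly) (he : H'.e = H.e) (c : V) :
    derivative (H.chp c) = C (n : ℝ) * H'.chp c := by
  have key : ∀ s : ℝ, H'.p (s • H.e - c) = H.p H.e * eval s (derivative (H.chp c)) := by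
    intro s
    rw [hp]
    unfold derivPoly
    have : (fun t : ℝ => H.p (t • H.e + (s • H.e - c))) =
        fun t => H.p H.e * eval (t + s) (H.chp c) := by
      funext t
      rw [← add_sub_assoc, ← add_smul, H.factor, eval_chp]
    rw [this]
    have h := ((H.chp c).hasDerivAt (0 + s)).comp_add_const 0 s
    rw [(h.const_mul (H.p H.e)).deriv, zero_add]
  have key2 : H'.p H.e = n * H.p H.e := by
    rw [hp]
    unfold derivPoly
    have : (fun t : ℝ => H.p (t • H.e + H.e)) = fun t => (t + 1) ^ n * H.p H.e := by
      funext t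
      rw [← H.homog, add_smul, one_smul]
    rw [this]
    have h := (((hasDerivAt_id (0:ℝ)).add_const 1).pow n).mul_const (H.p H.e)
    simpa using h.deriv
  apply Polynomial.funext
  intro s
  have h1 := key s
  have h2 := H'.factor c s
  rw [he, h1, key2, ← eval_chp] at h2
  apply mul_left_cancel₀ H.pe_ne
  rw [h2, eval_mul, eval_C]
  ring

open Polynomial in
lemma eval_chp_eq_zero {V : Type*} [AddCommGroup V] [Module ℝ V] {n : ℕ} (H : HypSys V n) (x : V)
    (i : Fin n) : eval (H.eig x i) (H.chp x) = 0 := by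
  rw [eval_chp]
  exact Finset.prod_eq_zero (Finset.mem_univ i) (sub_self _)

end HypSys

/-- (a) if `c ∈ Λ₊` has rank `k` in `(V, p, e)` with `1 ≤ k ≤ n − 1`, then
`c ∈ Λ₊′` and `c` has rank `k` in `(V, p′, e)`; (b) if `c ∈ Λ₊′` has rank `k` in
`(V, p′, e)` with `1 ≤ k ≤ n − 3`, then `c ∈ Λ₊` and `c` has rank `k` in `(V, p, e)`. -/
theorem statement8 {V : Type*} [AddCommGroup V] [Module ℝ V] [FiniteDimensional ℝ V]
    {n : ℕ} (H : HypSys V n)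
    (H' : HypSys V (n - 1)) (hp : H'.p = H.derivPoly) (he : H'.e = H.e)
    (c : V) (k : ℕ) :
    ((1 ≤ k → k ≤ n - 1 → c ∈ H.cone → H.rank c = k →
        c ∈ H'.cone ∧ H'.rank c = k) ∧
      (1 ≤ k → k ≤ n - 3 → c ∈ H'.cone → H'.rank c = k →
        c ∈ H.cone ∧ H.rank c = k)) := by
  rcases Nat.eq_zero_or_pos n with hn | hn
  · subst hn
    constructor <;> (intro h1 h2; omega)
  have hd := H.chp_deriv H' hp he c
  have hn0 : (n : ℝ) ≠ 0 := by exact_mod_cast hn.ne'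
  have hCn : Polynomial.C (n : ℝ) ≠ 0 := Polynomial.C_ne_zero.2 hn0
  have hr := H.rank_add c
  have hr' := H'.rank_add c
  have hm : (Polynomial.derivative (H.chp c)).rootMultiplicity 0
      = (H'.chp c).rootMultiplicity 0 := by
    rw [hd, Polynomial.rootMultiplicity_mul (mul_ne_zero hCn (H'.chp_ne c)),
      Polynomial.rootMultiplicity_C, zero_add]
  have hne : (Finset.univ : Finset (Fin n)).Nonempty := ⟨⟨0, hn⟩, Finset.mem_univ _⟩
  have hroot : (H.chp c).IsRoot 0 → (H'.chp c).rootMultiplicity 0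
      = (H.chp c).rootMultiplicity 0 - 1 := fun h => by
    rw [← hm, Polynomial.derivative_rootMultiplicity_of_root h]
  constructor
  · intro h1 h2 hc hk
    have h0 : 0 < (H.chp c).rootMultiplicity 0 := by omega
    have h3 := hroot ((Polynomial.rootMultiplicity_pos (H.chp_ne c)).1 h0)
    refine ⟨fun j => ?_, by omega⟩
    by_contra hj
    push Not at hj
    apply hypAux_logder_strict Finset.univ hne (H.eig c) (H'.eig c j)
      (fun i => lt_of_lt_of_le hj (hc i))
    change Polynomial.eval _ (Polynomial.derivative (H.chp c)) = 0
    rw [hd, Polynomial.eval_mul, H'.eval_chp_eq_zero, mul_zero]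
  · intro h1 h2 hc hk
    have hm2 : 1 < (Polynomial.derivative (H.chp c)).rootMultiplicity 0 := by omega
    have hdne : Polynomial.derivative (H.chp c) ≠ 0 := by
      rw [hd]; exact mul_ne_zero hCn (H'.chp_ne c)
    have hd1 := (Polynomial.one_lt_rootMultiplicity_iff_isRoot hdne).1 hm2
    have hz : (H.chp c).IsRoot 0 := by
      by_contra hz
      have := hypAux_newton_strict Finset.univ hne (H.eig c) 0 hz
      change 0 < (Polynomial.eval 0 (Polynomial.derivative (H.chp c))) ^ 2 -
        Polynomial.eval 0 (H.chp c) *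
          Polynomial.eval 0 (Polynomial.derivative (Polynomial.derivative (H.chp c))) at this
      rw [hd1.1.eq_zero, hd1.2.eq_zero] at this
      simp at this
    have h3 := hroot hz
    have h4 := (Polynomial.rootMultiplicity_pos (H.chp_ne c)).2 hz
    refine ⟨fun i => ?_, by omega⟩
    by_contra hi
    push Not at hi
    obtain ⟨x, hx, hx0⟩ := exists_deriv_eq_zero (f := fun t => Polynomial.eval t (H.chp c)) hi
      (Polynomial.continuous _).continuousOn
      (by rw [H.eval_chp_eq_zero]; exact hz.eq_zero.symm)
    rw [Polynomial.deriv, hd, Polynomial.eval_mul, Polynomial.eval_C, H'.eval_chp] at hx0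
    rcases mul_eq_zero.1 hx0 with h | h
    · exact hn0 h
    · obtain ⟨j, _, hj⟩ := Finset.prod_eq_zero_iff.1 h
      have := hc j
      have := hx.2
      linarith
end
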